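/- For every positive integer m, there is no group automorphism ρ of H_m = U/K_m such that ρ(ā) = ā^{-1}, ρ(b̄) = ā^2 b̄, and ρ(c̄) = c̄, where ā, b̄, c̄ denote the images of a, b, c in H_m; in particular, the image in H_1 of the element a^{-2} c^2 (a^2 b)^2 (a^{-1} c)^2 of U has order 2. (This expresses the chirality of the polytope Q_m whose rotation group is H_m.) -/

import Mathlib

/-- The defining relators of the group `U` on generators `a, b, c` (indexed `0, 1, 2`):
`a^4, b^4, c^4, (ab)^2, (bc)^2, (abc)^2, (a^2b^2)^4, a^2c^2b^2(ac)^2, [a,c⁻¹]b^2`,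
where `[x,y] = x⁻¹y⁻¹xy`. -/
def Urels : Set (FreeGroup (Fin 3)) :=
  {(FreeGroup.of 0) ^ 4, (FreeGroup.of 1) ^ 4, (FreeGroup.of 2) ^ 4,
   (FreeGroup.of 0 * FreeGroup.of 1) ^ 2,
   (FreeGroup.of 1 * FreeGroup.of 2) ^ 2,
   (FreeGroup.of 0 * FreeGroup.of 1 * FreeGroup.of 2) ^ 2,
   ((FreeGroup.of 0) ^ 2 * (FreeGroup.of 1) ^ 2) ^ 4,
   (FreeGroup.of 0) ^ 2 * (FreeGroup.of 2) ^ 2 * (FreeGroup.of 1) ^ 2 *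
     (FreeGroup.of 0 * FreeGroup.of 2) ^ 2,
   (FreeGroup.of 0)⁻¹ * FreeGroup.of 2 * FreeGroup.of 0 * (FreeGroup.of 2)⁻¹ *
     (FreeGroup.of 1) ^ 2}

/-- The finitely presented group `U`. -/
abbrev UGroup : Type := PresentedGroup Urels

/-- The generator `a` of `U`. -/
def Ua : UGroup := PresentedGroup.of 0

/-- The generator `b` of `U`. -/
def Ub : UGroup := PresentedGroup.of 1

/-- The generator `c` of `U`. -/
def Uc : UGroup := PresentedGroup.of 2

/-- The element `z = (bc⁻¹)^4` of `U`. -/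
def Uz : UGroup := (Ub * Uc⁻¹) ^ 4

/-- The element `w = (c⁻¹b)^4` of `U`. -/
def Uw : UGroup := (Uc⁻¹ * Ub) ^ 4

/-- The subgroup `K_m = ⟨z^m, w^m⟩` of `U`. -/
def UK (m : ℕ) : Subgroup UGroup := Subgroup.closure {Uz ^ m, Uw ^ m}

/-!
In terms of the involutions `p = ab`, `q = abc`, `r = bc` we have `a = qr`, `b = rqp`, `c = pq`, and
the mirror fixes `p` and `q` and sends `r` to `qrq`. The relator `a²c²b²(ac)²` says that the
involution `a² = ⁅q, r⁆` commutes with `prp`. Its mirror image is conjugate to `⁅⁅q, r⁆, p⁆²`, which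
is inverted as well as centralised by `r`, hence of order at most two. It is nontrivial in `H_1`:
in a permutation representation of `U` on four copies of `ZMod 8`, in which `z` and `w` act
trivially, it acts as translation by `4`. So for `K ≤ K_1` a mirror automorphism of `U / K` would
send `1` to a nontrivial element.
-/

open scoped commutatorElement

section Involutions

variable {G : Type*} [Group G]

theorem mul_self_mul_cancel {s : G} (hs : s * s = 1) (x : G) : s * (s * x) = x := by
  rw [← mul_assoc, hs, one_mul]

theorem conj_mul_self_eq_one {x : G} (hx : x * x = 1) (g : G) :
    g * x * g⁻¹ * (g * x * g⁻¹) = 1 := by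
  rw [conj_mul, hx, mul_one, mul_inv_cancel]

theorem commute_mul_of_inverts {a b x : G} (ha : SemiconjBy a x x⁻¹)
    (hb : SemiconjBy b x x⁻¹) : Commute (a * b) x :=
  SemiconjBy.mul_left (by simpa only [inv_inv] using ha.inv_right) hb

theorem commute_of_mul_self_eq_one {s u : G} (hs : s * s = 1) (hu : u * u = 1)
    (hsu : s * u * (s * u) = 1) : Commute s u := by
  have h := inv_eq_of_mul_eq_one_left hsu
  rwa [mul_inv_rev, inv_eq_of_mul_eq_one_left hs, inv_eq_of_mul_eq_one_left hu,
    eq_comm] at h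

theorem left_inverts_commutator {s : G} (hs : s * s = 1) (u : G) :
    SemiconjBy s ⁅s, u⁆ ⁅s, u⁆⁻¹ := by
  rw [SemiconjBy, commutatorElement_inv, commutatorElement_def, commutatorElement_def,
    inv_eq_of_mul_eq_one_left hs]
  simp only [mul_assoc, mul_self_mul_cancel hs, hs, mul_one]

theorem right_inverts_commutator (s : G) {u : G} (hu : u * u = 1) :
    SemiconjBy u ⁅s, u⁆ ⁅s, u⁆⁻¹ := by
  rw [SemiconjBy, commutatorElement_inv, commutatorElement_def, commutatorElement_def,
    inv_eq_of_mul_eq_one_left hu]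
  simp only [mul_assoc]

theorem commutator_eq_sq {s u : G} (hs : s * s = 1) (hu : u * u = 1) : ⁅s, u⁆ = (s * u) ^ 2 := by
  rw [commutatorElement_def, inv_eq_of_mul_eq_one_left hs, inv_eq_of_mul_eq_one_left hu,
    sq, mul_assoc _ s u]

theorem commutator_mul_self {s u : G} (hs : s * s = 1) (hu : u * u = 1) (h : (s * u) ^ 4 = 1) :
    ⁅s, u⁆ * ⁅s, u⁆ = 1 := by
  rw [commutator_eq_sq hs hu, ← pow_add, h]

theorem commute_commutator_left {s u : G} (hs : s * s = 1) (hu : u * u = 1)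
    (h : (s * u) ^ 4 = 1) : Commute s ⁅s, u⁆ := by
  have h' := left_inverts_commutator hs u
  rwa [inv_eq_of_mul_eq_one_left (commutator_mul_self hs hu h)] at h'

theorem commute_commutator_right {s u : G} (hs : s * s = 1) (hu : u * u = 1)
    (h : (s * u) ^ 4 = 1) : Commute u ⁅s, u⁆ := by
  have h' := right_inverts_commutator s hu
  rwa [inv_eq_of_mul_eq_one_left (commutator_mul_self hs hu h)] at h'

theorem sq_eq_inv_sq {x : G} (h : x ^ 4 = 1) : x ^ 2 = x⁻¹ ^ 2 := by
  rw [inv_pow, eq_inv_iff_mul_eq_one, ← pow_add, h]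

theorem sq_inverts_commutator {t b : G} (ht : t * t = 1) (hb : b ^ 4 = 1)
    (htb : (t * b) ^ 4 = 1) : SemiconjBy (b ^ 2) ⁅t, b⁻¹⁆ ⁅t, b⁻¹⁆⁻¹ := by
  have ht' : t⁻¹ = t := inv_eq_of_mul_eq_one_left ht
  rw [SemiconjBy, commutatorElement_inv, commutatorElement_def, commutatorElement_def, ht']
  calc b ^ 2 * (t * b⁻¹ * t * b⁻¹⁻¹) = b⁻¹ * (t * b)⁻¹ ^ 2 * b := by
        simp only [sq_eq_inv_sq hb, mul_inv_rev, ht', sq, mul_assoc, inv_inv]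
    _ = b⁻¹ * (t * b) ^ 2 * b := by rw [← sq_eq_inv_sq htb]
    _ = b⁻¹ * t * b⁻¹⁻¹ * t * b ^ 2 := by simp only [sq, mul_assoc, inv_inv]

/- `v` conjugates `t` both to `t(xy)` and to `t(yx)`, so `x` and `y` commute. -/
theorem sq_mul_eq_of_swap {t x y v : G} (ht : t * t = 1) (hx : x * x = 1) (hy : y * y = 1)
    (hxy : SemiconjBy v x y) (hyx : SemiconjBy v y x)
    (htx : Commute v (t * x)) (hty : Commute v (t * y)) : (t * x) ^ 2 = (t * y) ^ 2 := by
  have conj_t : SemiconjBy v t (t * (x * y)) := by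
    simpa only [mul_assoc, hx, mul_one] using SemiconjBy.mul_right htx.semiconjBy hxy
  have conj_t' : SemiconjBy v t (t * (y * x)) := by
    simpa only [mul_assoc, hy, mul_one] using SemiconjBy.mul_right hty.semiconjBy hyx
  have comm_xy : Commute x y :=
    mul_left_cancel (mul_right_cancel (conj_t.eq.symm.trans conj_t'.eq))
  have xy_mul_self : x * y * (x * y) = 1 := by
    rw [← sq, comm_xy.mul_pow, sq, sq, hx, hy, one_mul]
  have comm_t : Commute t (x * y) :=
    commute_of_mul_self_eq_one ht xy_mul_self ((conj_t.mul_right conj_t).eq_one_iff.mp ht)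
  have comm_ty : Commute (t * y) (x * y) :=
    comm_t.mul_left (comm_xy.symm.mul_right (Commute.refl y))
  calc (t * x) ^ 2 = (t * y * (x * y)) ^ 2 := by
        rw [mul_assoc, ← mul_assoc y, comm_xy.symm.eq, mul_assoc x, hy, mul_one]
    _ = (t * y) ^ 2 := by rw [comm_ty.mul_pow, sq (x * y), xy_mul_self, mul_one]

end Involutions

/-- The eighth defining relator `a²c²b²(ac)²` of `U`, as a function of the generators. Chirality is
detected by its value at the mirrored generators `a⁻¹`, `a²b`, `c`. -/
def relatorWord {G : Type*} [Group G] (a b c : G) : G :=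
  a ^ 2 * c ^ 2 * b ^ 2 * (a * c) ^ 2

theorem map_relatorWord {G H : Type*} [Group G] [Group H] (f : G →* H) (a b c : G) :
    f (relatorWord a b c) = relatorWord (f a) (f b) (f c) := by
  simp only [relatorWord, map_mul, map_pow]

theorem relatorWord_eq_conj_commutator {G : Type*} [Group G] {p q r : G} (hp : p * p = 1)
    (hq : q * q = 1) (hr : r * r = 1) (hpq : (p * q) ^ 4 = 1) (hrqp : (r * q * p) ^ 4 = 1) :
    relatorWord (q * r) (r * q * p) (p * q) = q * ⁅⁅r, q⁆, p * r * p⁆ * q⁻¹ := by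
  have hp' := inv_eq_of_mul_eq_one_left hp
  have hq' := inv_eq_of_mul_eq_one_left hq
  have hr' := inv_eq_of_mul_eq_one_left hr
  have rqp_sq : (r * q * p) ^ 2 = p * q * r * (p * q * r) := by
    rw [sq_eq_inv_sq hrqp, mul_inv_rev, mul_inv_rev, hp', hq', hr', ← mul_assoc, sq]
  have pq_cube : (p * q) ^ 2 * (p * q) = q * p := by
    have qp_eq : q * p = (p * q)⁻¹ := by rw [mul_inv_rev, hp', hq']
    rw [qp_eq, ← pow_succ, eq_inv_iff_mul_eq_one, ← pow_succ, hpq]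
  calc relatorWord (q * r) (r * q * p) (p * q)
      = (q * r) ^ 2 * ((p * q) ^ 2 * (p * q)) * (r * p * q * r) * (q * r * (p * q)) ^ 2 := by
        rw [relatorWord, rqp_sq]; simp only [mul_assoc]
    _ = (q * r) ^ 2 * (q * p) * (r * p * q * r) * (q * r * (p * q)) ^ 2 := by rw [pq_cube]
    _ = q * ⁅⁅r, q⁆, p * r * p⁆ * q⁻¹ := by
      simp only [commutatorElement_def, sq, mul_inv_rev, hp', hq', hr', mul_assoc,
        mul_self_mul_cancel hq]

/-- Involutions `p`, `q`, `r` for which `a = qr`, `b = rqp`, `c = pq` satisfy the relations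
`a⁴ = b⁴ = c⁴ = 1` and `a²c²b²(ac)² = 1` of `U`. -/
structure IsUTriple {G : Type*} [Group G] (p q r : G) : Prop where
  p_mul_self : p * p = 1
  q_mul_self : q * q = 1
  r_mul_self : r * r = 1
  qr_pow_four : (q * r) ^ 4 = 1
  rqp_pow_four : (r * q * p) ^ 4 = 1
  pq_pow_four : (p * q) ^ 4 = 1
  relatorWord_eq_one : relatorWord (q * r) (r * q * p) (p * q) = 1

namespace IsUTriple

variable {G : Type*} [Group G] {p q r : G} (h : IsUTriple p q r)
include h

theorem p_inv : p⁻¹ = p := inv_eq_of_mul_eq_one_left h.p_mul_self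

theorem q_inv : q⁻¹ = q := inv_eq_of_mul_eq_one_left h.q_mul_self

theorem r_inv : r⁻¹ = r := inv_eq_of_mul_eq_one_left h.r_mul_self

theorem commutator_qr_mul_self : ⁅q, r⁆ * ⁅q, r⁆ = 1 :=
  commutator_mul_self h.q_mul_self h.r_mul_self h.qr_pow_four

theorem commutator_qr_inv : ⁅q, r⁆⁻¹ = ⁅q, r⁆ :=
  inv_eq_of_mul_eq_one_left h.commutator_qr_mul_self

theorem commute_q_commutator_qr : Commute q ⁅q, r⁆ :=
  commute_commutator_left h.q_mul_self h.r_mul_self h.qr_pow_four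

theorem commute_r_commutator_qr : Commute r ⁅q, r⁆ :=
  commute_commutator_right h.q_mul_self h.r_mul_self h.qr_pow_four

theorem commute_prp_commutator_qr : Commute (p * r * p) ⁅q, r⁆ := by
  have hw := h.relatorWord_eq_one
  rwa [relatorWord_eq_conj_commutator h.p_mul_self h.q_mul_self h.r_mul_self h.pq_pow_four
    h.rqp_pow_four, conj_eq_one_iff, ← commutatorElement_inv q r,
    h.commutator_qr_inv, commutatorElement_eq_one_iff_commute,
    Commute.symm_iff] at hw

theorem commute_r_conj_commutator_qr : Commute r (p * ⁅q, r⁆ * p⁻¹) := by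
  have hr : p * (p * r * p) * p⁻¹ = r := by
    rw [mul_inv_eq_iff_eq_mul, mul_assoc p r, mul_self_mul_cancel h.p_mul_self]
  simpa only [hr] using (Commute.conj_iff p).mpr h.commute_prp_commutator_qr

theorem commutator_qr_p_eq_mul_conj : ⁅⁅q, r⁆, p⁆ = ⁅q, r⁆ * (p * ⁅q, r⁆ * p⁻¹) := by
  rw [commutatorElement_def _ p, h.commutator_qr_inv]
  simp only [mul_assoc]

theorem commute_r_commutator_qr_p : Commute r ⁅⁅q, r⁆, p⁆ := by
  rw [h.commutator_qr_p_eq_mul_conj]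
  exact h.commute_r_commutator_qr.mul_right h.commute_r_conj_commutator_qr

theorem inv_rqp : (r * q * p)⁻¹ = p * (q * r) := by
  rw [mul_inv_rev, mul_inv_rev, h.p_inv,
    h.q_inv, h.r_inv]

theorem commutator_qr_mul_rqp : ⁅q, r⁆ * (r * q * p) = q * r * p := by
  simp only [commutatorElement_def, h.q_inv, mul_assoc,
    inv_mul_cancel_left, mul_self_mul_cancel h.q_mul_self]

theorem qrp_pow_four : (q * r * p) ^ 4 = 1 := by
  have h_conj : SemiconjBy p (q * r * p) (r * q * p)⁻¹ := by
    rw [h.inv_rqp, SemiconjBy, mul_assoc p]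
  rw [(h_conj.pow_right 4).eq_one_iff, inv_pow, h.rqp_pow_four, inv_one]

theorem rqp_sq_inverts_commutator_qr_p :
    SemiconjBy ((r * q * p) ^ 2) ⁅⁅q, r⁆, p⁆ ⁅⁅q, r⁆, p⁆⁻¹ := by
  have commute_qr : Commute ⁅q, r⁆ (q * r) :=
    h.commute_q_commutator_qr.symm.mul_right h.commute_r_commutator_qr.symm
  have commutator_inv : ⁅⁅q, r⁆, (r * q * p)⁻¹⁆ = ⁅⁅q, r⁆, p⁆ := by
    rw [h.inv_rqp, commutatorElement_mul_right_eq_mul_conj,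
      commutatorElement_eq_one_iff_commute.mpr commute_qr, mul_one, mul_inv_cancel_right]
  simpa only [commutator_inv] using
    sq_inverts_commutator h.commutator_qr_mul_self h.rqp_pow_four
      (h.commutator_qr_mul_rqp.symm ▸ h.qrp_pow_four)

theorem p_inverts_commutator_qr_p : SemiconjBy p ⁅⁅q, r⁆, p⁆ ⁅⁅q, r⁆, p⁆⁻¹ :=
  right_inverts_commutator _ h.p_mul_self

theorem commute_pr_conj_commutator_qr_p : Commute (p * r) (q * ⁅⁅q, r⁆, p⁆ * q⁻¹) := by
  have commute_word : Commute (r * ((r * q * p) ^ 2 * p)) ⁅⁅q, r⁆, p⁆ :=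
    h.commute_r_commutator_qr_p.mul_left
      (commute_mul_of_inverts h.rqp_sq_inverts_commutator_qr_p h.p_inverts_commutator_qr_p)
  have pr_eq : q * (r * ((r * q * p) ^ 2 * p)) * q⁻¹ = p * r := by
    simp only [sq, mul_assoc, h.q_inv, h.p_mul_self, h.q_mul_self,
      mul_self_mul_cancel h.q_mul_self, mul_self_mul_cancel h.r_mul_self, mul_one]
  simpa only [pr_eq] using (Commute.conj_iff q).mpr commute_word

theorem conj_commutator_qr_p_eq : q * ⁅⁅q, r⁆, p⁆ * q⁻¹ = ⁅⁅q, r⁆, q * p * q⁻¹⁆ := by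
  rw [conjugate_commutatorElement, h.commute_q_commutator_qr.mul_inv_cancel]

theorem r_inverts_conj_commutator_qr_p :
    SemiconjBy r (q * ⁅⁅q, r⁆, p⁆ * q⁻¹) (q * ⁅⁅q, r⁆, p⁆ * q⁻¹)⁻¹ := by
  have r_eq : ⁅q, r⁆ * (q * r * q⁻¹) = r := by
    rw [← MulAut.conj_apply, conj_eq_commutatorElement_mul,
      mul_self_mul_cancel h.commutator_qr_mul_self]
  have h_commutator : SemiconjBy ⁅q, r⁆ (q * ⁅⁅q, r⁆, p⁆ * q⁻¹) (q * ⁅⁅q, r⁆, p⁆ * q⁻¹)⁻¹ := by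
    rw [h.conj_commutator_qr_p_eq]
    exact left_inverts_commutator h.commutator_qr_mul_self _
  have h_conj : Commute (q * r * q⁻¹) (q * ⁅⁅q, r⁆, p⁆ * q⁻¹) :=
    (Commute.conj_iff q).mpr h.commute_r_commutator_qr_p
  simpa only [r_eq] using h_commutator.mul_left h_conj

theorem p_inverts_conj_commutator_qr_p :
    SemiconjBy p (q * ⁅⁅q, r⁆, p⁆ * q⁻¹) (q * ⁅⁅q, r⁆, p⁆ * q⁻¹)⁻¹ := by
  simpa only [mul_assoc p r r, h.r_mul_self, mul_one] using
    SemiconjBy.mul_left h.commute_pr_conj_commutator_qr_p.inv_right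
      h.r_inverts_conj_commutator_qr_p

theorem qpq_inverts_conj_commutator_qr_p :
    SemiconjBy (q * p * q⁻¹) (q * ⁅⁅q, r⁆, p⁆ * q⁻¹) (q * ⁅⁅q, r⁆, p⁆ * q⁻¹)⁻¹ := by
  simpa only [conj_inv] using SemiconjBy.conj_iff.mpr h.p_inverts_commutator_qr_p

theorem qpq_inverts_commutator_qr_p : SemiconjBy (q * p * q⁻¹) ⁅⁅q, r⁆, p⁆ ⁅⁅q, r⁆, p⁆⁻¹ := by
  have p_eq : q * (q * p * q⁻¹) * q⁻¹ = p := by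
    simp only [mul_assoc, h.q_inv, mul_self_mul_cancel h.q_mul_self,
      h.q_mul_self, mul_one]
  rw [← SemiconjBy.conj_iff (b := q), p_eq, ← conj_inv]
  exact h.p_inverts_conj_commutator_qr_p

theorem commutator_pq_eq : ⁅p, q⁆ = p * (q * p * q⁻¹) := by
  rw [commutatorElement_def, h.p_inv]
  simp only [mul_assoc]

theorem commutator_pq_inv : ⁅p, q⁆⁻¹ = ⁅p, q⁆ :=
  inv_eq_of_mul_eq_one_left (commutator_mul_self h.p_mul_self h.q_mul_self h.pq_pow_four)

theorem commute_commutator_pq_commutator_qr_p : Commute ⁅p, q⁆ ⁅⁅q, r⁆, p⁆ := by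
  rw [h.commutator_pq_eq]
  exact commute_mul_of_inverts h.p_inverts_commutator_qr_p h.qpq_inverts_commutator_qr_p

theorem commute_commutator_pq_conj : Commute ⁅p, q⁆ (q * ⁅⁅q, r⁆, p⁆ * q⁻¹) := by
  rw [h.commutator_pq_eq]
  exact commute_mul_of_inverts h.p_inverts_conj_commutator_qr_p h.qpq_inverts_conj_commutator_qr_p

theorem conj_commutator_qr_p_eq_mul :
    q * ⁅⁅q, r⁆, p⁆ * q⁻¹ = ⁅q, r⁆ * (q * (p * ⁅q, r⁆ * p⁻¹) * q⁻¹) := by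
  rw [h.commutator_qr_p_eq_mul_conj, ← conj_mul, h.commute_q_commutator_qr.mul_inv_cancel]

theorem commutator_pq_semiconjBy_conj : SemiconjBy ⁅p, q⁆ (p * ⁅q, r⁆ * p⁻¹)
    (q * (p * ⁅q, r⁆ * p⁻¹) * q⁻¹) := by
  rw [← h.commutator_pq_inv, commutatorElement_inv, commutatorElement_def]
  exact (((SemiconjBy.conj_mk q _).mul_left (SemiconjBy.conj_mk p _)).mul_left
    h.commute_q_commutator_qr.inv_left).mul_left (SemiconjBy.conj_mk p _).inv_symm_left

theorem commutator_qr_p_sq_eq_conj_sq : ⁅⁅q, r⁆, p⁆ ^ 2 = (q * ⁅⁅q, r⁆, p⁆ * q⁻¹) ^ 2 := by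
  have h_swap := h.commutator_pq_semiconjBy_conj
  have h_swap' := h_swap.inv_symm_left
  rw [h.commutator_pq_inv] at h_swap'
  rw [h.conj_commutator_qr_p_eq_mul, h.commutator_qr_p_eq_mul_conj]
  refine sq_mul_eq_of_swap h.commutator_qr_mul_self
    (conj_mul_self_eq_one h.commutator_qr_mul_self p)
    (conj_mul_self_eq_one (conj_mul_self_eq_one h.commutator_qr_mul_self p) q) h_swap h_swap' ?_ ?_
  · rw [← h.commutator_qr_p_eq_mul_conj]
    exact h.commute_commutator_pq_commutator_qr_p
  · rw [← h.conj_commutator_qr_p_eq_mul]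
    exact h.commute_commutator_pq_conj

theorem commutator_qr_p_pow_four : ⁅⁅q, r⁆, p⁆ ^ 4 = 1 := by
  have h_inv : SemiconjBy r (⁅⁅q, r⁆, p⁆ ^ 2) (⁅⁅q, r⁆, p⁆ ^ 2)⁻¹ := by
    rw [h.commutator_qr_p_sq_eq_conj_sq, ← inv_pow]
    exact h.r_inverts_conj_commutator_qr_p.pow_right 2
  have h_comm : Commute r (⁅⁅q, r⁆, p⁆ ^ 2) := h.commute_r_commutator_qr_p.pow_right 2
  have sq_eq_inv : ⁅⁅q, r⁆, p⁆ ^ 2 = (⁅⁅q, r⁆, p⁆ ^ 2)⁻¹ :=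
    mul_right_cancel (h_comm.eq.symm.trans h_inv.eq)
  rwa [eq_inv_iff_mul_eq_one, ← pow_add] at sq_eq_inv

theorem relatorWord_mirror_eq :
    relatorWord (q * r)⁻¹ ((q * r) ^ 2 * (r * q * p)) (p * q) = q * ⁅⁅q, r⁆, p⁆ ^ 2 * q⁻¹ := by
  have hq := h.q_mul_self
  have hs : q * r * q⁻¹ * (q * r * q⁻¹) = 1 := conj_mul_self_eq_one h.r_mul_self q
  have a_eq : (q * r)⁻¹ = q * (q * r * q⁻¹) := by
    rw [mul_inv_rev, h.q_inv, h.r_inv, mul_assoc q r, mul_self_mul_cancel hq]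
  have b_eq : (q * r) ^ 2 * (r * q * p) = q * r * q⁻¹ * q * p := by
    rw [← commutator_eq_sq hq h.r_mul_self, h.commutator_qr_mul_rqp, inv_mul_cancel_right]
  have commutator_eq : ⁅q * r * q⁻¹, q⁆ = ⁅q, r⁆ := by
    rw [commutator_eq_sq hs hq, inv_mul_cancel_right, commutator_eq_sq hq h.r_mul_self]
  have conj_eq : p * (q * r * q⁻¹) * p = p * ⁅q, r⁆ * p⁻¹ * (p * r * p) := by
    rw [← MulAut.conj_apply q, conj_eq_commutatorElement_mul]
    simp only [mul_assoc, inv_mul_cancel_left]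
  rw [a_eq, b_eq, relatorWord_eq_conj_commutator h.p_mul_self hq hs h.pq_pow_four
    (by rw [inv_mul_cancel_right, h.qrp_pow_four]), commutator_eq, conj_eq,
    commutatorElement_mul_right_eq_mul_conj,
    commutatorElement_eq_one_iff_commute.mpr h.commute_prp_commutator_qr.symm, mul_one,
    mul_inv_cancel_right, commutator_eq_sq h.commutator_qr_mul_self
      (conj_mul_self_eq_one h.commutator_qr_mul_self p), ← h.commutator_qr_p_eq_mul_conj]

theorem relatorWord_mirror_sq_eq_one :
    relatorWord (q * r)⁻¹ ((q * r) ^ 2 * (r * q * p)) (p * q) ^ 2 = 1 := by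
  rw [h.relatorWord_mirror_eq, conj_pow, ← pow_mul, h.commutator_qr_p_pow_four, mul_one,
    mul_inv_cancel]

end IsUTriple

section Relations

variable {G : Type*} [Group G] {a b c : G}

theorem abc_mul_bc (hbc : (b * c) ^ 2 = 1) : a * b * c * (b * c) = a := by
  rw [mul_assoc a, mul_assoc, ← sq, hbc, mul_one]

theorem bc_mul_abc_mul_ab (hbc : (b * c) ^ 2 = 1) (habc : (a * b * c) ^ 2 = 1) :
    b * c * (a * b * c) * (a * b) = b := by
  have bc_mul_abc : b * c * (a * b * c) = a⁻¹ := by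
    rw [eq_inv_iff_mul_eq_one]
    nth_rw 2 [← abc_mul_bc (a := a) hbc]
    rw [mul_assoc, ← mul_assoc (a * b * c), ← sq, habc, one_mul, ← sq, hbc]
  rw [bc_mul_abc, inv_mul_cancel_left]

theorem ab_mul_abc (hab : (a * b) ^ 2 = 1) : a * b * (a * b * c) = c := by
  rw [← mul_assoc, ← sq, hab, one_mul]

theorem relatorWord_mirror_sq_eq_one (ha : a ^ 4 = 1) (hb : b ^ 4 = 1) (hc : c ^ 4 = 1)
    (hab : (a * b) ^ 2 = 1) (hbc : (b * c) ^ 2 = 1) (habc : (a * b * c) ^ 2 = 1)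
    (hrel : relatorWord a b c = 1) : relatorWord a⁻¹ (a ^ 2 * b) c ^ 2 = 1 := by
  have a_eq := abc_mul_bc (a := a) hbc
  have b_eq := bc_mul_abc_mul_ab hbc habc
  have c_eq := ab_mul_abc (c := c) hab
  have triple : IsUTriple (a * b) (a * b * c) (b * c) :=
    { p_mul_self := by rw [← sq, hab]
      q_mul_self := by rw [← sq, habc]
      r_mul_self := by rw [← sq, hbc]
      qr_pow_four := by rw [a_eq, ha]
      rqp_pow_four := by rw [b_eq, hb]
      pq_pow_four := by rw [c_eq, hc]
      relatorWord_eq_one := by rw [a_eq, b_eq, c_eq, hrel] }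
  simpa only [a_eq, b_eq, c_eq] using triple.relatorWord_mirror_sq_eq_one

end Relations

theorem relatorWord_UGroup_eq_one : relatorWord Ua Ub Uc = 1 :=
  PresentedGroup.one_of_mem (rels := Urels)
    (x := relatorWord (FreeGroup.of 0) (FreeGroup.of 1) (FreeGroup.of 2))
    (by simp [Urels, relatorWord])

theorem relatorWord_mirror_UGroup_sq_eq_one : relatorWord Ua⁻¹ (Ua ^ 2 * Ub) Uc ^ 2 = 1 := by
  have rel : ∀ w ∈ Urels, PresentedGroup.mk Urels w = 1 := fun _ => PresentedGroup.one_of_mem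
  simp only [Urels, Set.mem_insert_iff, Set.mem_singleton_iff, forall_eq_or_imp, forall_eq] at rel
  obtain ⟨ha, hb, hc, hab, hbc, habc, -⟩ := rel
  exact relatorWord_mirror_sq_eq_one ha hb hc hab hbc habc relatorWord_UGroup_eq_one

/-- The involution by which `ab` acts in the permutation representation of `U` on four copies of
`ZMod 8`, indexed by `Bool × Bool`. -/
def permP : Equiv.Perm (Bool × Bool × ZMod 8) :=
  Function.Involutive.toPerm (fun (i, j, x) => (j, i, if i = j then -x else x))
    (by unfold Function.Involutive; decide)

/-- The involution by which `abc` acts; the indices `i` and `j` enter as the numbers `0`, `1`. -/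
def permQ : Equiv.Perm (Bool × Bool × ZMod 8) :=
  Function.Involutive.toPerm (fun (i, j, x) => (j, i, i.toNat + j.toNat - x))
    (by unfold Function.Involutive; decide)

/-- The involution by which `bc` acts. -/
def permR : Equiv.Perm (Bool × Bool × ZMod 8) :=
  Function.Involutive.toPerm (fun (i, j, x) => (!i, j, x))
    (by unfold Function.Involutive; decide)

/-- The permutations by which `a = qr`, `b = rqp`, `c = pq` act, for `p = ab`, `q = abc`,
`r = bc`. -/
def permGen : Fin 3 → Equiv.Perm (Bool × Bool × ZMod 8) :=
  ![permQ * permR, permR * permQ * permP, permP * permQ]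

theorem lift_permGen_eq_one : ∀ w ∈ Urels, FreeGroup.lift permGen w = 1 := by
  simp only [Urels, Set.mem_insert_iff, Set.mem_singleton_iff, forall_eq_or_imp, forall_eq]
  refine ⟨?_, ?_, ?_, ?_, ?_, ?_, ?_, ?_, ?_⟩ <;> exact Equiv.ext (by decide)

/-- The permutation representation of `U` that tells the mirrored relator from `1` modulo `K_1`. -/
def permHom : UGroup →* Equiv.Perm (Bool × Bool × ZMod 8) :=
  PresentedGroup.toGroup lift_permGen_eq_one

theorem UK_one_le_ker_permHom : UK 1 ≤ permHom.ker := by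
  have hz : permHom Uz = 1 := Equiv.ext (by decide)
  have hw : permHom Uw = 1 := Equiv.ext (by decide)
  rw [UK, Subgroup.closure_le, pow_one, pow_one, Set.pair_subset_iff]
  exact ⟨hz, hw⟩

theorem relatorWord_mirror_notMem_UK_one : relatorWord Ua⁻¹ (Ua ^ 2 * Ub) Uc ∉ UK 1 := by
  intro hx
  have fixed := DFunLike.congr_fun (UK_one_le_ker_permHom hx) (false, false, 0)
  revert fixed
  decide

theorem UK_le_UK_one (m : ℕ) : UK m ≤ UK 1 := by
  have hz : Uz ∈ UK 1 := Subgroup.subset_closure (by simp)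
  have hw : Uw ∈ UK 1 := Subgroup.subset_closure (by simp)
  rw [UK, Subgroup.closure_le, Set.pair_subset_iff]
  exact ⟨pow_mem hz m, pow_mem hw m⟩

theorem Hm_no_mirror_automorphism_general (K : Subgroup UGroup) [K.Normal] (hK : K ≤ UK 1) :
    (¬ ∃ ρ : UGroup ⧸ K →* UGroup ⧸ K,
        ρ (QuotientGroup.mk Ua) = (QuotientGroup.mk Ua : UGroup ⧸ K)⁻¹ ∧
        ρ (QuotientGroup.mk Ub) =
          (QuotientGroup.mk Ua : UGroup ⧸ K) ^ 2 * QuotientGroup.mk Ub ∧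
        ρ (QuotientGroup.mk Uc) = (QuotientGroup.mk Uc : UGroup ⧸ K)) ∧
    orderOf (QuotientGroup.mk (relatorWord Ua⁻¹ (Ua ^ 2 * Ub) Uc) : UGroup ⧸ K) = 2 := by
  have mk_ne_one : QuotientGroup.mk' K (relatorWord Ua⁻¹ (Ua ^ 2 * Ub) Uc) ≠ 1 := fun h =>
    relatorWord_mirror_notMem_UK_one (hK ((QuotientGroup.eq_one_iff _).mp h))
  refine ⟨fun ⟨ρ, ha, hb, hc⟩ => mk_ne_one ?_, orderOf_eq_prime ?_ mk_ne_one⟩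
  · calc QuotientGroup.mk' K (relatorWord Ua⁻¹ (Ua ^ 2 * Ub) Uc)
        = relatorWord (ρ (QuotientGroup.mk Ua)) (ρ (QuotientGroup.mk Ub))
            (ρ (QuotientGroup.mk Uc)) := by rw [ha, hb, hc]; rfl
      _ = ρ (QuotientGroup.mk' K (relatorWord Ua Ub Uc)) := by
        rw [map_relatorWord, map_relatorWord]; rfl
      _ = 1 := by rw [relatorWord_UGroup_eq_one, map_one, map_one]
  · exact congrArg (QuotientGroup.mk' K) relatorWord_mirror_UGroup_sq_eq_one

/-- For every positive integer `m`, there is no automorphism `ρ` of `H_m = U / K_m` with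
`ρ(ā) = ā⁻¹`, `ρ(b̄) = ā² b̄` and `ρ(c̄) = c̄`; in particular, the image in `H_1` of
`a⁻² c² (a² b)² (a⁻¹ c)²` has order `2`. (This expresses the chirality of the polytope
`Q_m` whose rotation group is `H_m`.) -/
theorem Hm_no_mirror_automorphism (m : ℕ) (hm : 0 < m)
    (hnorm : (UK m).Normal) (hnorm1 : (UK 1).Normal) :
    haveI := hnorm
    haveI := hnorm1
    (¬ ∃ ρ : (UGroup ⧸ UK m) ≃* (UGroup ⧸ UK m),
        ρ (QuotientGroup.mk Ua) = (QuotientGroup.mk Ua : UGroup ⧸ UK m)⁻¹ ∧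
        ρ (QuotientGroup.mk Ub) =
          (QuotientGroup.mk Ua : UGroup ⧸ UK m) ^ 2 * QuotientGroup.mk Ub ∧
        ρ (QuotientGroup.mk Uc) = (QuotientGroup.mk Uc : UGroup ⧸ UK m)) ∧
    orderOf (QuotientGroup.mk (Ua⁻¹ ^ 2 * Uc ^ 2 * (Ua ^ 2 * Ub) ^ 2 * (Ua⁻¹ * Uc) ^ 2) :
        UGroup ⧸ UK 1) = 2 :=
  ⟨fun ⟨ρ, hρ⟩ => (Hm_no_mirror_automorphism_general (UK m) (UK_le_UK_one m)).1 ⟨ρ, hρ⟩,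
    (Hm_no_mirror_automorphism_general (UK 1) le_rfl).2⟩
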